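/- arXiv:1210.3511 — 2 statements merged into one kernel-verified Lean document; each statement's English description precedes it below -/
import Mathlib

section
/- Let p = 5 and let f : ℝ → ℝ be a Schwartz function (smooth with all derivatives rapidly decreasing) that satisfies the fourth-order similarity ODE -f''''(y) + (1/4)·y·f'(y) + (1/(p-1))·f(y) + |f(y)|^p = 0 for all y ∈ ℝ. Then f is identically zero. -/
open MeasureTheory

/-!
At the critical exponent `1 / (p - 1) = 1 / 4`, so the linear part of the equation is an exact
derivative: `-f'''' + (1/4) (y f' + f) = (-f''' + (1/4) y f)'`. The function being differentiated is
Schwartz, so integrating the equation over `ℝ` leaves `∫ |f| ^ p = 0`, which forces `f = 0`.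
-/

open SchwartzMap

section Flux

variable {F : Type*} [NormedAddCommGroup F] [NormedSpace ℝ F]

theorem coe_iterate_derivCLM (n : ℕ) (f : 𝓢(ℝ, F)) :
    ⇑((derivCLM ℝ F)^[n] f) = iteratedDeriv n f := by
  induction n generalizing f with
  | zero => rw [Function.iterate_zero_apply, iteratedDeriv_zero]
  | succ n ih =>
    rw [Function.iterate_succ_apply, ih, iteratedDeriv_succ']
    rfl

theorem hasDerivAt_iteratedDeriv_schwartzMap (n : ℕ) (f : 𝓢(ℝ, F)) (y : ℝ) :
    HasDerivAt (iteratedDeriv n f) (iteratedDeriv (n + 1) f y) y := by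
  rw [iteratedDeriv_succ, ← coe_iterate_derivCLM]
  exact SchwartzMap.hasDerivAt _ y

theorem hasDerivAt_smulLeftCLM_id (f : 𝓢(ℝ, F)) (y : ℝ) :
    HasDerivAt (smulLeftCLM F (id : ℝ → ℝ) f) (y • deriv f y + f y) y := by
  rw [smulLeftCLM_apply .id]
  simpa only [id, one_smul] using (hasDerivAt_id y).fun_smul (f.hasDerivAt y)

/-- The flux `a f⁽ⁿ⁾ + b y f` of the linear similarity operator `a f⁽ⁿ⁺¹⁾ + b (y f' + f)` of order
`n + 1`, bundled as a Schwartz function so that its derivative has zero integral. -/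
noncomputable def similarityFlux (n : ℕ) (a b : ℝ) (f : 𝓢(ℝ, F)) : 𝓢(ℝ, F) :=
  a • (derivCLM ℝ F)^[n] f + b • smulLeftCLM F (id : ℝ → ℝ) f

theorem deriv_similarityFlux (n : ℕ) (a b : ℝ) (f : 𝓢(ℝ, F)) (y : ℝ) :
    deriv (similarityFlux n a b f) y =
      a • iteratedDeriv (n + 1) f y + b • (y • deriv f y + f y) := by
  have hcoe : ⇑(similarityFlux n a b f) =
      a • iteratedDeriv n f + b • ⇑(smulLeftCLM F (id : ℝ → ℝ) f) := by
    rw [← coe_iterate_derivCLM]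
    rfl
  rw [hcoe]
  exact (((hasDerivAt_iteratedDeriv_schwartzMap n f y).const_smul a).add
    ((hasDerivAt_smulLeftCLM_id f y).const_smul b)).deriv

theorem integral_deriv_schwartzMap (f : 𝓢(ℝ, F)) : ∫ y, deriv f y = 0 :=
  integral_eq_zero_of_hasDerivAt_of_integrable f.hasDerivAt (derivCLM ℝ F f).integrable
    f.integrable

end Flux

theorem deriv_schwartzMap_eq_zero_of_nonpos (f : 𝓢(ℝ, ℝ)) (hf : ∀ y, deriv f y ≤ 0) :
    deriv f = 0 := by
  have hint : ∫ y, -deriv f y = 0 := by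
    rw [integral_neg, integral_deriv_schwartzMap, neg_zero]
  have hae : -deriv f =ᵐ[volume] 0 :=
    (integral_eq_zero_iff_of_nonneg (fun y ↦ neg_nonneg.2 (hf y))
      (derivCLM ℝ ℝ f).integrable.neg).1 hint
  exact neg_eq_zero.1 <|
    (Continuous.ae_eq_iff_eq volume (derivCLM ℝ ℝ f).continuous.neg continuous_zero).1 hae

theorem stmt_1_general (n : ℕ) (a b p : ℝ) (hp : 0 < p) (f : 𝓢(ℝ, ℝ))
    (hode : ∀ y : ℝ,
      a * iteratedDeriv (n + 1) f y + b * (y * deriv f y + f y) + |f y| ^ p = 0) :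
    ∀ y : ℝ, f y = 0 := by
  have hflux (y : ℝ) : deriv (similarityFlux n a b f) y = -|f y| ^ p :=
    (deriv_similarityFlux n a b f y).trans (eq_neg_of_add_eq_zero_left (hode y))
  have hconst : deriv (similarityFlux n a b f) = 0 :=
    deriv_schwartzMap_eq_zero_of_nonpos _ fun y ↦ by
      rw [hflux, neg_nonpos]
      positivity
  intro y
  have hpow : |f y| ^ p = 0 := neg_eq_zero.1 ((hflux y).symm.trans (congrFun hconst y))
  exact abs_eq_zero.1 ((Real.rpow_eq_zero (abs_nonneg _) hp.ne').1 hpow)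

/-- In the critical case `p = 5`, the only Schwartz solution of the
fourth-order similarity ODE `-f'''' + (1/4)·y·f' + (1/(p-1))·f + |f|^p = 0` is `f ≡ 0`. -/
theorem stmt_1 (p : ℝ) (hp : p = 5) (f : SchwartzMap ℝ ℝ)
    (hode : ∀ y : ℝ,
      -(iteratedDeriv 4 (⇑f) y) + (1 / 4) * y * deriv (⇑f) y
        + (1 / (p - 1)) * f y + |f y| ^ p = 0) :
    ∀ y : ℝ, f y = 0 := by
  subst hp
  exact stmt_1_general 3 (-1) (1 / 4) 5 (by norm_num) f fun y ↦ by linear_combination hode y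
end

section
/- Let m ≥ 1 and l ≥ 0 be natural numbers and let F : ℝ → ℝ be a smooth function satisfying the one-dimensional kernel equation -(-1)^m·F^{(2m)}(y) + (1/(2m))·y·F'(y) + (1/(2m))·F(y) = 0 for all y ∈ ℝ. Then the function u(x,t) := t^{-(1+l)/(2m)}·F^{(l)}(x·t^{-1/(2m)}) satisfies the linear poly-harmonic heat equation ∂_t u(x,t) = -(-1)^m·∂_x^{2m} u(x,t) for all x ∈ ℝ and all t > 0. -/
/-!
The operator `B w = κ w⁽ⁿ⁾ + n⁻¹ y w' + n⁻¹ w` satisfies `(B w)' = B w' + n⁻¹ w'`. Hence `B F = 0`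
makes `F⁽ˡ⁾` an eigenfunction of `B` with eigenvalue `-l/n`. On the other hand, the function
`t ^ a G(x t ^ (-1/n))` solves `u_t = κ ∂ₓⁿ u` as soon as `B G = (a + n⁻¹) G`, because both sides of
the evolution equation scale by the same factor `t ^ (a - 1)`. The patterns are the case
`G = F⁽ˡ⁾`, `a = -(1 + l)/n`; the polyharmonic heat equation is `n = 2m`, `κ = -(-1)ᵐ`.
-/

variable {E : Type*} [NormedAddCommGroup E] [NormedSpace ℝ E]

section HermiteOperator

variable {n l : ℕ} {κ : ℝ} {w : ℝ → E}

/-- The Hermite-type operator `B w = κ w⁽ⁿ⁾ + n⁻¹ y w' + n⁻¹ w`, obtained from the evolution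
equation `u_t = κ ∂ₓⁿ u` by passing to the self-similar variable `y = x t ^ (-1/n)`. The paper's
operator has `n = 2m` and `κ = -(-1)ᵐ`. -/
noncomputable def hermiteOperator (n : ℕ) (κ : ℝ) (w : ℝ → E) (y : ℝ) : E :=
  κ • iteratedDeriv n w y + (n : ℝ)⁻¹ • y • deriv w y + (n : ℝ)⁻¹ • w y

theorem contDiff_iteratedDeriv (hw : ContDiff ℝ (n + l : ℕ) w) :
    ContDiff ℝ n (iteratedDeriv l w) :=
  iteratedDeriv_eq_iterate (f := w) ▸ hw.iterate_deriv' n l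

theorem hasDerivAt_hermiteOperator (hn : n ≠ 0) (hw : ContDiff ℝ (n + 1 : ℕ) w) (y : ℝ) :
    HasDerivAt (hermiteOperator n κ w)
      (hermiteOperator n κ (deriv w) y + (n : ℝ)⁻¹ • deriv w y) y := by
  have hw_two : ContDiff ℝ 2 w := hw.of_le (by exact_mod_cast (by lia : 2 ≤ n + 1))
  have h_top : HasDerivAt (iteratedDeriv n w) (iteratedDeriv n (deriv w) y) y := by
    rw [← iteratedDeriv_succ', iteratedDeriv_succ]
    exact (hw.differentiable_iteratedDeriv' n y).hasDerivAt
  have h_deriv : HasDerivAt (deriv w) (deriv (deriv w) y) y :=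
    (hw_two.differentiable_deriv_two y).hasDerivAt
  have h_self : HasDerivAt w (deriv w y) y := (hw_two.differentiable (by simp) y).hasDerivAt
  have h_drift := ((hasDerivAt_id y).smul h_deriv).const_smul (n : ℝ)⁻¹
  refine (((h_top.const_smul κ).add h_drift).add (h_self.const_smul (n : ℝ)⁻¹)).congr_deriv ?_
  simp only [hermiteOperator, id]
  module

theorem iteratedDeriv_hermiteOperator (hn : n ≠ 0) (hw : ContDiff ℝ (n + l : ℕ) w) (y : ℝ) :
    iteratedDeriv l (hermiteOperator n κ w) y =
      hermiteOperator n κ (iteratedDeriv l w) y + ((l : ℝ) / n) • iteratedDeriv l w y := by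
  induction l generalizing y with
  | zero => simp
  | succ l ih =>
    have hw' : ContDiff ℝ (n + 1 : ℕ) (iteratedDeriv l w) :=
      contDiff_iteratedDeriv (by rwa [add_assoc, add_comm 1])
    have h_eq : iteratedDeriv l (hermiteOperator n κ w) =
        hermiteOperator n κ (iteratedDeriv l w) + ((l : ℝ) / n) • iteratedDeriv l w :=
      funext (ih (hw.of_le (by gcongr; simp)))
    have h_self := (hw'.differentiable (by simp) y).hasDerivAt
    rw [iteratedDeriv_succ, iteratedDeriv_succ, h_eq,
      ((hasDerivAt_hermiteOperator hn hw' y).add (h_self.const_smul _)).deriv]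
    push_cast
    module

theorem hermiteOperator_iteratedDeriv_of_eq_zero (hn : n ≠ 0) (hw : ContDiff ℝ (n + l : ℕ) w)
    (hker : hermiteOperator n κ w = 0) (y : ℝ) :
    hermiteOperator n κ (iteratedDeriv l w) y = (-(l : ℝ) / n) • iteratedDeriv l w y := by
  have h := iteratedDeriv_hermiteOperator (κ := κ) hn hw y
  rw [hker, iteratedDeriv_const_zero] at h
  rw [neg_div, neg_smul]
  exact eq_neg_of_add_eq_zero_left h.symm

end HermiteOperator

section SelfSimilar

variable {n : ℕ} {κ a b t : ℝ} {G : ℝ → E}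

/-- The self-similar function `(x, t) ↦ t ^ a G(x t ^ b)` with profile `G`. The powers are real
powers, so this is meaningful for `t > 0`. -/
noncomputable def selfSimilar (a b : ℝ) (G : ℝ → E) (x t : ℝ) : E :=
  t ^ a • G (x * t ^ b)

theorem hasDerivAt_selfSimilar_time (hG : Differentiable ℝ G) (ht : 0 < t) (x : ℝ) :
    HasDerivAt (fun s ↦ selfSimilar a b G x s)
      (t ^ (a - 1) • (a • G (x * t ^ b) + b • (x * t ^ b) • deriv G (x * t ^ b))) t := by
  have h_arg : HasDerivAt (fun s ↦ x * s ^ b) (x * (b * t ^ (b - 1))) t :=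
    (Real.hasDerivAt_rpow_const (Or.inl ht.ne')).const_mul x
  have h_amp : HasDerivAt (fun s ↦ s ^ a) (a * t ^ (a - 1)) t :=
    Real.hasDerivAt_rpow_const (Or.inl ht.ne')
  refine (h_amp.smul ((hG _).hasDerivAt.scomp t h_arg)).congr_deriv ?_
  simp only [Function.comp_apply, Real.rpow_sub_one ht.ne']
  module

theorem iteratedDeriv_selfSimilar_space (hG : ContDiff ℝ n G) (x : ℝ) :
    iteratedDeriv n (fun z ↦ selfSimilar a b G z t) x =
      (t ^ a * (t ^ b) ^ n) • iteratedDeriv n G (x * t ^ b) := by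
  simp only [selfSimilar, mul_comm _ (t ^ b)]
  rw [iteratedDeriv_fun_const_smul_field, mul_smul]
  exact congrArg (t ^ a • ·) (congrFun (iteratedDeriv_comp_const_smul hG (t ^ b)) x)

theorem hasDerivAt_selfSimilar_of_hermiteOperator_eq (hn : n ≠ 0) (hG : ContDiff ℝ n G)
    (hB : ∀ y, hermiteOperator n κ G y = (a + (n : ℝ)⁻¹) • G y) (ht : 0 < t) (x : ℝ) :
    HasDerivAt (fun s ↦ selfSimilar a (-1 / n) G x s)
      (κ • iteratedDeriv n (fun z ↦ selfSimilar a (-1 / n) G z t) x) t := by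
  have h_pow : (t ^ (-1 / n : ℝ)) ^ n = t⁻¹ := by
    rw [neg_div, one_div, Real.rpow_neg ht.le, inv_pow, Real.rpow_inv_natCast_pow ht.le hn]
  have h_profile (y : ℝ) :
      a • G y + (-1 / n : ℝ) • y • deriv G y = κ • iteratedDeriv n G y := by
    have h_eigen := hB y
    unfold hermiteOperator at h_eigen
    linear_combination (norm := module) -h_eigen
  refine (hasDerivAt_selfSimilar_time (hG.differentiable (by simpa)) ht x).congr_deriv ?_
  rw [iteratedDeriv_selfSimilar_space hG, h_profile, h_pow, Real.rpow_sub_one ht.ne',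
    div_eq_mul_inv, smul_comm]

end SelfSimilar

theorem stmt_16_general {n l : ℕ} (hn : n ≠ 0) {κ : ℝ} {F : ℝ → E} (hF : ContDiff ℝ (n + l : ℕ) F)
    (hker : hermiteOperator n κ F = 0) (x : ℝ) {t : ℝ} (ht : 0 < t) :
    HasDerivAt (fun s ↦ selfSimilar (-(1 + l) / n) (-1 / n) (iteratedDeriv l F) x s)
      (κ • iteratedDeriv n
        (fun z ↦ selfSimilar (-(1 + l) / n) (-1 / n) (iteratedDeriv l F) z t) x) t := by
  refine hasDerivAt_selfSimilar_of_hermiteOperator_eq hn (contDiff_iteratedDeriv hF) (fun y ↦ ?_)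
    ht x
  rw [hermiteOperator_iteratedDeriv_of_eq_zero hn hF hker]
  congr 1
  ring

/-- if the smooth function `F` solves the 1D kernel equation
`-(-1)^m·F^{(2m)} + (1/(2m))·y·F' + (1/(2m))·F = 0`, then for every `l ≥ 0` the
linearized pattern `u(x,t) = t^{-(1+l)/(2m)}·F^{(l)}(x·t^{-1/(2m)})` solves the
linear poly-harmonic heat equation `u_t = -(-1)^m·∂_x^{2m} u` for `t > 0`. -/
theorem stmt_16 (m l : ℕ) (hm : 1 ≤ m) (F : ℝ → ℝ) (hF : ContDiff ℝ (⊤ : ℕ∞) F)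
    (hker : ∀ y : ℝ,
      -((-1 : ℝ) ^ m * iteratedDeriv (2 * m) F y)
        + (1 / (2 * (m : ℝ))) * y * deriv F y
        + (1 / (2 * (m : ℝ))) * F y = 0) :
    ∀ x t : ℝ, 0 < t →
      deriv (fun s : ℝ =>
        s ^ (-((1 : ℝ) + l) / (2 * (m : ℝ)))
          * iteratedDeriv l F (x * s ^ (-(1 : ℝ) / (2 * (m : ℝ))))) t
      = -((-1 : ℝ) ^ m * iteratedDeriv (2 * m)
          (fun z : ℝ =>
            t ^ (-((1 : ℝ) + l) / (2 * (m : ℝ)))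
              * iteratedDeriv l F (z * t ^ (-(1 : ℝ) / (2 * (m : ℝ))))) x) := by
  intro x t ht
  have hB : hermiteOperator (2 * m) (-(-1) ^ m) F = 0 :=
    funext fun y ↦ by simpa [hermiteOperator, mul_assoc] using hker y
  simpa [selfSimilar] using
    (stmt_16_general (l := l) (by lia) (contDiff_infty.1 hF _) hB x ht).deriv
end
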